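/- The buy price map is concave and the sell price map is convex in the Minkowski sense: for all claims C¹, C² : Ω → ℝ^d and every λ ∈ [0,1], with C^λ := λC¹ + (1−λ)C², one has λP^b(C¹) + (1−λ)P^b(C²) ⊆ P^b(C^λ) and λP^s(C¹) + (1−λ)P^s(C²) ⊆ P^s(C^λ), where the sums of sets are Minkowski sums. -/

import Mathlib

open Pointwise

/-!
Since the utility is concave, the inclusion `a • A x + (1 - a) • A y ⊆ A (a • x + (1 - a) • y)`
passes from `A` to the value set `V (x, C)`, jointly in `x` and `C`. For a fixed set `S`, the
condition `S ⊆ V (x, C)` therefore cuts out a convex set of pairs: write each `v ∈ S` as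
`a • v + (1 - a) • v`. The graph of the buy price is the preimage of such a convex set, with
`S = V (x₀, 0)`, under the affine map `(C, p) ↦ (x₀ - p, C)`, and the sell prices of `C` are the
negatives of the buy prices of `-C`.
-/

section MinkowskiConcave

/-- Concavity of a set-valued map for inclusion and Minkowski operations. It says that the graph of
`Φ` is convex, so it also expresses convexity of a map ordered by reverse inclusion, such as the
sell price. -/
def MinkowskiConcave (𝕜 : Type*) {E F : Type*} [Ring 𝕜] [PartialOrder 𝕜] [Add E] [SMul 𝕜 E]
    [Add F] [SMul 𝕜 F] (Φ : E → Set F) : Prop :=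
  ∀ (x y : E) (a : 𝕜), 0 ≤ a → a ≤ 1 → a • Φ x + (1 - a) • Φ y ⊆ Φ (a • x + (1 - a) • y)

variable {𝕜 E F : Type*}

theorem minkowskiConcave_iff_forall_mem [Ring 𝕜] [PartialOrder 𝕜] [Add E] [SMul 𝕜 E]
    [Add F] [SMul 𝕜 F] {Φ : E → Set F} :
    MinkowskiConcave 𝕜 Φ ↔ ∀ (x y : E) (a : 𝕜), 0 ≤ a → a ≤ 1 →
      ∀ v ∈ Φ x, ∀ w ∈ Φ y, a • v + (1 - a) • w ∈ Φ (a • x + (1 - a) • y) := by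
  simp only [MinkowskiConcave, Set.add_subset_iff, ← Set.image_smul, Set.forall_mem_image]

namespace MinkowskiConcave

protected theorem closure [Ring 𝕜] [PartialOrder 𝕜] [Add E] [SMul 𝕜 E] [Add F] [SMul 𝕜 F]
    [TopologicalSpace F] [ContinuousAdd F] [ContinuousConstSMul 𝕜 F] {Φ : E → Set F}
    (hΦ : MinkowskiConcave 𝕜 Φ) : MinkowskiConcave 𝕜 fun x => closure (Φ x) := by
  rw [minkowskiConcave_iff_forall_mem] at hΦ ⊢
  intro x y a ha₀ ha₁ v hv w hw
  exact map_mem_closure₂ (f := fun v w => a • v + (1 - a) • w) (by fun_prop) hv hw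
    (hΦ x y a ha₀ ha₁)

theorem convex_setOf_subset [Ring 𝕜] [PartialOrder 𝕜] [IsOrderedAddMonoid 𝕜] [AddCommMonoid E]
    [SMul 𝕜 E] [AddCommMonoid F] [Module 𝕜 F] {Φ : E → Set F}
    (hΦ : MinkowskiConcave 𝕜 Φ) (S : Set F) : Convex 𝕜 {x | S ⊆ Φ x} := by
  intro x hx y hy a b ha hb hab v hv
  obtain rfl : b = 1 - a := eq_sub_of_add_eq' hab
  rw [← Convex.combo_self hab v]
  exact minkowskiConcave_iff_forall_mem.1 hΦ x y a ha (sub_nonneg.1 hb) v (hx hv) v (hy hv)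

theorem neg_comp_neg [Ring 𝕜] [PartialOrder 𝕜] [AddCommGroup E] [Module 𝕜 E] [AddCommGroup F]
    [Module 𝕜 F] {Φ : E → Set F} (hΦ : MinkowskiConcave 𝕜 Φ) :
    MinkowskiConcave 𝕜 fun x => -Φ (-x) := by
  rw [minkowskiConcave_iff_forall_mem] at hΦ ⊢
  intro x y a ha₀ ha₁ v hv w hw
  simpa only [Set.mem_neg, neg_add, smul_neg] using hΦ (-x) (-y) a ha₀ ha₁ (-v) hv (-w) hw

end MinkowskiConcave

end MinkowskiConcave

section Concave

variable {𝕜 E : Type*} [Semiring 𝕜] [PartialOrder 𝕜] [AddCommMonoid E] [SMul 𝕜 E]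

theorem concaveOn_pi {κ : Type*} {β : κ → Type*} [∀ k, AddCommMonoid (β k)]
    [∀ k, PartialOrder (β k)] [∀ k, SMul 𝕜 (β k)] {s : Set E} (hs : Convex 𝕜 s)
    {f : E → ∀ k, β k} (hf : ∀ k, ConcaveOn 𝕜 s fun x => f x k) : ConcaveOn 𝕜 s f :=
  ⟨hs, fun _ hx _ hy _ _ ha hb hab k => (hf k).2 hx hy ha hb hab⟩

theorem concaveOn_finset_sum {ι β : Type*} [AddCommMonoid β] [PartialOrder β]
    [IsOrderedAddMonoid β] [Module 𝕜 β] {s : Set E} (hs : Convex 𝕜 s) {t : Finset ι}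
    {f : ι → E → β} (hf : ∀ i ∈ t, ConcaveOn 𝕜 s (f i)) :
    ConcaveOn 𝕜 s fun x => ∑ i ∈ t, f i x := by
  simp only [← Finset.sum_apply]
  refine Finset.sum_induction f (ConcaveOn 𝕜 s) (fun _ _ => ConcaveOn.add) ?_ hf
  exact concaveOn_const 0 hs

end Concave

section ExpectedUtility

variable {𝕜 G Ω ι κ : Type*} [CommRing 𝕜] [PartialOrder 𝕜] [Fintype Ω]

/-- The vector of expected utilities of a random vector, one component for each pair of a utility
function `u i` and a measure on the finite space `Ω`, given by its point masses `Q j`. -/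
def expectedUtility (Q : κ → Ω → 𝕜) (u : ι → G → 𝕜) (W : Ω → G) : ι × κ → 𝕜 :=
  fun ij => ∑ ω, Q ij.2 ω * u ij.1 (W ω)

theorem concaveOn_expectedUtility [IsOrderedRing 𝕜] [AddCommMonoid G] [Module 𝕜 G]
    {Q : κ → Ω → 𝕜} (hQ : ∀ j ω, 0 ≤ Q j ω) {u : ι → G → 𝕜}
    (hu : ∀ i, ConcaveOn 𝕜 Set.univ (u i)) :
    ConcaveOn 𝕜 Set.univ (expectedUtility Q u) :=
  concaveOn_pi convex_univ fun ij => concaveOn_finset_sum convex_univ fun ω _ =>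
    ((hu ij.1).comp_linearMap (LinearMap.proj (φ := fun _ : Ω => G) ω)).smul (hQ ij.2 ω)

end ExpectedUtility

section Prices

variable {E X F : Type*} [AddCommGroup E] [AddCommGroup X] [Preorder F] [TopologicalSpace F]

/-- The closed set of utility levels dominated by `U (W + C)` for some random vector `W ∈ A x`
available from the endowment `x`, when the claim `C` is also received. -/
def valueSet (A : E → Set X) (U : X → F) (x : E) (C : X) : Set F :=
  closure {v | ∃ W ∈ A x, v ≤ U (W + C)}

/-- The prices `p` at which an agent with endowment `x₀` loses no attainable utility level by
buying the claim `C`. -/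
def buyPrice (A : E → Set X) (U : X → F) (x₀ : E) (C : X) : Set E :=
  {p | valueSet A U x₀ 0 ⊆ valueSet A U (x₀ - p) C}

/-- The prices `p` at which an agent with endowment `x₀` loses no attainable utility level by
selling the claim `C`. -/
def sellPrice (A : E → Set X) (U : X → F) (x₀ : E) (C : X) : Set E :=
  {p | valueSet A U x₀ 0 ⊆ valueSet A U (x₀ + p) (-C)}

theorem sellPrice_eq_neg_buyPrice_neg (A : E → Set X) (U : X → F) (x₀ : E) (C : X) :
    sellPrice A U x₀ C = -buyPrice A U x₀ (-C) := by
  ext p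
  simp only [sellPrice, buyPrice, Set.mem_neg, Set.mem_ofPred_eq, sub_neg_eq_add]

end Prices

section PriceConcavity

variable {𝕜 E X F : Type*} [CommRing 𝕜] [PartialOrder 𝕜] [IsOrderedAddMonoid 𝕜]
  [AddCommGroup E] [Module 𝕜 E] [AddCommGroup X] [Module 𝕜 X]
  [AddCommMonoid F] [PartialOrder F] [IsOrderedAddMonoid F] [Module 𝕜 F] [PosSMulMono 𝕜 F]
  [TopologicalSpace F] [ContinuousAdd F] [ContinuousConstSMul 𝕜 F]
  {A : E → Set X} {U : X → F}

theorem minkowskiConcave_valueSet (hA : MinkowskiConcave 𝕜 A) (hU : ConcaveOn 𝕜 Set.univ U) :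
    MinkowskiConcave 𝕜 fun y : E × X => valueSet A U y.1 y.2 := by
  refine MinkowskiConcave.closure (minkowskiConcave_iff_forall_mem.2 ?_)
  rintro ⟨x, C⟩ ⟨y, D⟩ a ha₀ ha₁ v ⟨W, hW, hv⟩ w ⟨Z, hZ, hw⟩
  have hb : 0 ≤ 1 - a := sub_nonneg.2 ha₁
  refine ⟨a • W + (1 - a) • Z,
    minkowskiConcave_iff_forall_mem.1 hA x y a ha₀ ha₁ W hW Z hZ, ?_⟩
  calc
    a • v + (1 - a) • w ≤ a • U (W + C) + (1 - a) • U (Z + D) := by gcongr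
    _ ≤ U (a • (W + C) + (1 - a) • (Z + D)) :=
      hU.2 (Set.mem_univ _) (Set.mem_univ _) ha₀ hb (add_sub_cancel a 1)
    _ = U (a • W + (1 - a) • Z + (a • C + (1 - a) • D)) := by
      rw [smul_add, smul_add, add_add_add_comm]

theorem minkowskiConcave_buyPrice (hA : MinkowskiConcave 𝕜 A) (hU : ConcaveOn 𝕜 Set.univ U)
    (x₀ : E) : MinkowskiConcave 𝕜 (buyPrice A U x₀) := by
  rw [minkowskiConcave_iff_forall_mem]
  intro C D a ha₀ ha₁ p hp q hq
  have hconvex : Convex 𝕜 {y : E × X | valueSet A U x₀ 0 ⊆ valueSet A U y.1 y.2} :=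
    (minkowskiConcave_valueSet hA hU).convex_setOf_subset _
  have hcombo : a • (x₀ - p, C) + (1 - a) • (x₀ - q, D) =
      (x₀ - (a • p + (1 - a) • q), a • C + (1 - a) • D) :=
    Prod.ext (by simp only [Prod.smul_mk, Prod.mk_add_mk]; module) rfl
  have hmem : a • (x₀ - p, C) + (1 - a) • (x₀ - q, D) ∈
      {y : E × X | valueSet A U x₀ 0 ⊆ valueSet A U y.1 y.2} :=
    hconvex hp hq ha₀ (sub_nonneg.2 ha₁) (add_sub_cancel a 1)
  rwa [hcombo] at hmem

theorem minkowskiConcave_sellPrice (hA : MinkowskiConcave 𝕜 A) (hU : ConcaveOn 𝕜 Set.univ U)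
    (x₀ : E) : MinkowskiConcave 𝕜 (sellPrice A U x₀) := by
  rw [funext (sellPrice_eq_neg_buyPrice_neg A U x₀)]
  exact (minkowskiConcave_buyPrice hA hU x₀).neg_comp_neg

theorem stmt9_general (hA : MinkowskiConcave 𝕜 A) (hU : ConcaveOn 𝕜 Set.univ U) (x₀ : E) :
    MinkowskiConcave 𝕜 (buyPrice A U x₀) ∧ MinkowskiConcave 𝕜 (sellPrice A U x₀) :=
  ⟨minkowskiConcave_buyPrice hA hU x₀, minkowskiConcave_sellPrice hA hU x₀⟩

end PriceConcavity

theorem stmt9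
    {d r s : ℕ} (hd : 0 < d) (hr : 0 < r) (hs : 0 < s)
    {Ω : Type} [Fintype Ω] [Nonempty Ω]
    (Q : Fin s → Ω → ℝ)
    (hQ0 : ∀ j ω, 0 ≤ Q j ω) (hQ1 : ∀ j, ∑ ω : Ω, Q j ω = 1)
    (u : Fin r → (Fin d → ℝ) → ℝ)
    (hcont : ∀ i, Continuous (u i))
    (hconc : ∀ i, ConcaveOn ℝ Set.univ (u i))
    (hmono : ∀ i, Monotone (u i))
    (hstrict : ∀ i (x y : Fin d → ℝ), (∀ k, x k < y k) → u i x < u i y)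
    (A : (Fin d → ℝ) → Set (Ω → Fin d → ℝ))
    (hAconv : ∀ x, Convex ℝ (A x))
    (hAcomb : ∀ (x y : Fin d → ℝ) (a : ℝ), 0 ≤ a → a ≤ 1 →
      a • A x + (1 - a) • A y ⊆ A (a • x + (1 - a) • y))
    (hAmono : ∀ x y : Fin d → ℝ, x ≤ y → A x ⊆ A y)
    (x0 : Fin d → ℝ) :
    let U : (Ω → Fin d → ℝ) → (Fin r × Fin s → ℝ) :=
      fun W ij => ∑ ω : Ω, Q ij.2 ω * u ij.1 (W ω)
    let V : (Fin d → ℝ) → (Ω → Fin d → ℝ) → Set (Fin r × Fin s → ℝ) :=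
      fun x C => closure {v | ∃ W ∈ A x, v ≤ U (W + C)}
    let Pb : (Ω → Fin d → ℝ) → Set (Fin d → ℝ) :=
      fun C => {p | V x0 0 ⊆ V (x0 - p) C}
    let Ps : (Ω → Fin d → ℝ) → Set (Fin d → ℝ) :=
      fun C => {p | V x0 0 ⊆ V (x0 + p) (-C)}
    ∀ (C₁ C₂ : Ω → Fin d → ℝ) (a : ℝ), 0 ≤ a → a ≤ 1 →
      a • Pb C₁ + (1 - a) • Pb C₂ ⊆ Pb (a • C₁ + (1 - a) • C₂) ∧
      a • Ps C₁ + (1 - a) • Ps C₂ ⊆ Ps (a • C₁ + (1 - a) • C₂) := by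
  intro U V Pb Ps C₁ C₂ a ha₀ ha₁
  have hprices := stmt9_general hAcomb (concaveOn_expectedUtility hQ0 hconc) x0
  exact ⟨hprices.1 C₁ C₂ a ha₀ ha₁, hprices.2 C₁ C₂ a ha₀ ha₁⟩
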